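/- Let b > 0, x > 0, p₂ > 0, p₁ ≥ 0 and p₀ ≥ 0, and define f(v) = v^{−2p₁/b²} · exp( 2p₀/(b²·v) − 2p₂·v/b² ) for v > 0. If p₀ > 0 or 2p₁ ≥ b², then ∫_0^x f(v) dv = +∞ and lim_{ε → 0⁺} ( ∫_ε^x f(v) dv ) / ( ∫_ε^{+∞} f(v) dv ) = 1. -/

import Mathlib

open MeasureTheory Filter Topology

/-!
Near `0` the integrand dominates a multiple of `v⁻¹`: through `exp (2p₀ / (b²v))`, which beats every
power of `v`, if `p₀ > 0`, and through `v ^ (-2p₁/b²)` if `2p₁ ≥ b²`. Hence `∫_ε^x f → ∞` as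
`ε → 0⁺`, while `K = ∫_x^∞ f` is finite and does not depend on `ε`, so the quotient is `t / (t + K)`
with `t → ∞`.
-/

open Set Asymptotics

section DivergentIntegrals

lemma tendsto_div_self_add_const_atTop {𝕜 : Type*} [Field 𝕜] [LinearOrder 𝕜]
    [IsStrictOrderedRing 𝕜] [TopologicalSpace 𝕜] [OrderTopology 𝕜] (K : 𝕜) :
    Tendsto (fun t : 𝕜 => t / (t + K)) atTop (𝓝 1) := by
  have hzero : Tendsto (fun t : 𝕜 => K / (t + K)) atTop (𝓝 0) :=
    (tendsto_atTop_add_const_right _ K tendsto_id).const_div_atTop K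
  have hone : Tendsto (fun t : 𝕜 => 1 - K / (t + K)) atTop (𝓝 1) := by
    simpa only [sub_zero] using hzero.const_sub 1
  refine hone.congr' ?_
  filter_upwards [eventually_gt_atTop (-K)] with t ht
  have : t + K ≠ 0 := (neg_lt_iff_pos_add.mp ht).ne'
  field_simp
  ring

lemma not_integrableOn_of_sub_inv_isBigO_nhdsGT {E : Type*} [NormedAddCommGroup E] {a : ℝ}
    {f : ℝ → E} {s : Set ℝ} (hs : s ∈ 𝓝[>] a) (hf : (fun v => (v - a)⁻¹) =O[𝓝[>] a] f) :
    ¬IntegrableOn f s := by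
  have hderiv : ∀ v ∈ Ioi a, HasDerivAt (fun v => Real.log (v - a)) (v - a)⁻¹ v := fun v hv => by
    simpa only [one_div] using ((hasDerivAt_id' v).sub_const a).log (sub_pos.mpr hv).ne'
  have hlog : Tendsto (fun v => Real.log (v - a)) (𝓝[>] a) atBot := by
    refine Real.tendsto_log_nhdsGT_zero.comp (tendsto_nhdsWithin_iff.mpr ⟨?_, ?_⟩)
    · exact ((continuous_sub_right a).tendsto' a 0 (sub_self a)).mono_left nhdsWithin_le_nhds
    · filter_upwards [self_mem_nhdsWithin] with v (hv : a < v) using sub_pos.mpr hv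
  refine not_integrableOn_of_tendsto_norm_atTop_of_deriv_isBigO_filter (𝓝[>] a) hs ?_
    (tendsto_abs_atBot_atTop.comp hlog) (hf.congr' ?_ EventuallyEq.rfl)
  · filter_upwards [self_mem_nhdsWithin] with v hv using (hderiv v hv).differentiableAt
  · filter_upwards [self_mem_nhdsWithin] with v hv using (hderiv v hv).deriv.symm

variable {μ : Measure ℝ} [NullSingletonClass μ] {a x : ℝ} {f : ℝ → ℝ}

lemma tendsto_intervalIntegral_nhdsGT_atTop_of_not_integrableOn
    (hloc : LocallyIntegrableOn f (Ioc a x) μ) (hnonneg : ∀ v ∈ Ioc a x, 0 ≤ f v)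
    (hdiv : ¬IntegrableOn f (Ioc a x) μ) :
    Tendsto (fun ε => ∫ v in ε..x, f v ∂μ) (𝓝[>] a) atTop := by
  have hax : a < x := by
    by_contra! hxa
    exact hdiv (Ioc_eq_empty_of_le hxa ▸ integrableOn_empty)
  have hnonneg_ae : 0 ≤ᵐ[μ.restrict (Ioc a x)] f :=
    ae_restrict_of_forall_mem measurableSet_Ioc hnonneg
  have htop : ∫⁻ v in Ioc a x, ENNReal.ofReal (f v) ∂μ = ⊤ := not_ne_iff.mp fun h =>
    hdiv ((lintegral_ofReal_ne_top_iff_integrable hloc.aestronglyMeasurable hnonneg_ae).mp h)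
  have hcover : AECover (μ.restrict (Ioc a x)) (𝓝[>] a) fun ε => Ioc ε x :=
    aecover_Ioc_of_Ioc nhdsWithin_le_nhds tendsto_const_nhds
  have hlim := hcover.lintegral_tendsto_of_countably_generated
    hloc.aestronglyMeasurable.aemeasurable.ennreal_ofReal
  rw [htop] at hlim
  refine ENNReal.tendsto_ofReal_nhds_top.mp (hlim.congr' ?_)
  filter_upwards [Ioo_mem_nhdsGT hax] with ε ⟨haε, hεx⟩
  have hsub : Ioc ε x ⊆ Ioc a x := Ioc_subset_Ioc_left haε.le
  have hint : IntegrableOn f (Ioc ε x) μ :=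
    (hloc.integrableOn_compact_subset (Icc_subset_Ioc haε le_rfl) isCompact_Icc).mono_set
      Ioc_subset_Icc_self
  rw [Measure.restrict_restrict_of_subset hsub, intervalIntegral.integral_of_le hεx.le,
    ofReal_integral_eq_lintegral_ofReal hint (ae_restrict_of_ae_restrict_of_subset hsub hnonneg_ae)]

lemma tendsto_intervalIntegral_div_integral_Ioi_of_not_integrableOn
    (hloc : LocallyIntegrableOn f (Ioc a x) μ) (hnonneg : ∀ v ∈ Ioc a x, 0 ≤ f v)
    (hdiv : ¬IntegrableOn f (Ioc a x) μ) (hint : IntegrableOn f (Ioi x) μ) :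
    Tendsto (fun ε => (∫ v in ε..x, f v ∂μ) / ∫ v in Ioi ε, f v ∂μ) (𝓝[>] a) (𝓝 1) := by
  have hatTop := tendsto_intervalIntegral_nhdsGT_atTop_of_not_integrableOn hloc hnonneg hdiv
  refine ((tendsto_div_self_add_const_atTop (∫ v in Ioi x, f v ∂μ)).comp hatTop).congr' ?_
  filter_upwards [hatTop.eventually_ne_atTop 0] with ε hε
  have hεx : IntervalIntegrable f μ ε x :=
    intervalIntegral.intervalIntegrable_of_integral_ne_zero hε
  rw [Function.comp_apply, intervalIntegral.integral_interval_add_Ioi' hεx hint]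

end DivergentIntegrals

section RpowMulExp

variable {α β γ : ℝ}

lemma eventually_le_rpow_mul_exp_mul_atTop (hβ : 0 ≤ β) (hαβ : 0 < β ∨ 1 ≤ α) :
    ∀ᶠ t : ℝ in atTop, t ≤ t ^ α * Real.exp (β * t) := by
  rcases hαβ with hβ_pos | hα
  · filter_upwards [(tendsto_exp_mul_div_rpow_atTop (1 - α) β hβ_pos).eventually_ge_atTop 1,
      eventually_gt_atTop 0] with t hexp ht
    calc t = t ^ α * t ^ (1 - α) := by rw [← Real.rpow_add ht, add_sub_cancel, Real.rpow_one]
      _ ≤ t ^ α * Real.exp (β * t) := by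
        gcongr
        exact (one_le_div₀ (Real.rpow_pos_of_pos ht _)).mp hexp
  · filter_upwards [eventually_ge_atTop 1] with t ht
    calc t ≤ t ^ α := Real.self_le_rpow_of_one_le ht hα
      _ ≤ t ^ α * Real.exp (β * t) :=
        le_mul_of_one_le_right (by positivity) (Real.one_le_exp (by positivity))

lemma exists_rpow_mul_exp_isBigO_rpow_atTop (hγ : 0 ≤ γ) (hαγ : 0 < γ ∨ 1 < α) :
    ∃ s < (-1 : ℝ), (fun v : ℝ => v ^ (-α) * Real.exp (-γ * v)) =O[atTop] fun v => v ^ s := by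
  rcases hαγ with hγ_pos | hα
  · refine ⟨-2, by norm_num, ?_⟩
    have hexp := (isLittleO_exp_neg_mul_rpow_atTop hγ_pos (α - 2)).isBigO
    refine ((isBigO_refl (fun v : ℝ => v ^ (-α)) atTop).mul hexp).congr' .rfl ?_
    filter_upwards [eventually_gt_atTop 0] with v hv
    rw [← Real.rpow_add hv]
    ring_nf
  · refine ⟨-α, neg_lt_neg hα, .of_norm_eventuallyLE ?_⟩
    filter_upwards [eventually_ge_atTop 0] with v hv
    rw [Real.norm_of_nonneg (by positivity)]
    refine mul_le_of_le_one_right (by positivity) (Real.exp_le_one_iff.mpr ?_)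
    exact mul_nonpos_of_nonpos_of_nonneg (neg_nonpos.mpr hγ) hv

end RpowMulExp

/-- The scale density `v ^ (-α) * exp (β / v - γ * v)` of the diffusion
`dV = (p₀ + p₁ V + p₂ V²) dt + b V dW` on `(0, ∞)`, in the parameters `α = 2p₁ / b²`,
`β = 2p₀ / b²` and `γ = 2p₂ / b²`. Its values at `v ≤ 0` are junk. -/
noncomputable def scaleDensity (α β γ v : ℝ) : ℝ :=
  v ^ (-α) * Real.exp (β / v - γ * v)

namespace scaleDensity

variable {α β γ : ℝ}

lemma pos (α β γ : ℝ) {v : ℝ} (hv : 0 < v) : 0 < scaleDensity α β γ v :=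
  mul_pos (Real.rpow_pos_of_pos hv _) (Real.exp_pos _)

lemma continuousOn_Ioi (α β γ : ℝ) : ContinuousOn (scaleDensity α β γ) (Ioi 0) := by
  have hne : ∀ v ∈ Ioi (0 : ℝ), v ≠ 0 := fun v hv => ne_of_gt hv
  exact (continuousOn_id.rpow_const fun v hv => .inl (hne v hv)).mul
    (Real.continuous_exp.comp_continuousOn
      ((continuousOn_const.div continuousOn_id hne).sub (by fun_prop)))

lemma locallyIntegrableOn_Ioi (α β γ : ℝ) :
    LocallyIntegrableOn (scaleDensity α β γ) (Ioi 0) :=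
  (continuousOn_Ioi α β γ).locallyIntegrableOn measurableSet_Ioi

lemma inv_isBigO_nhdsGT_zero (γ : ℝ) (hβ : 0 ≤ β) (hαβ : 0 < β ∨ 1 ≤ α) :
    (fun v => v⁻¹) =O[𝓝[>] 0] scaleDensity α β γ := by
  have hexp : ∀ᶠ v in 𝓝[>] (0 : ℝ), γ * v ≤ 1 := nhdsWithin_le_nhds <|
    (continuous_const_mul γ).tendsto' 0 0 (mul_zero γ) |>.eventually_le_const one_pos
  refine .of_bound (Real.exp 1) ?_
  filter_upwards [self_mem_nhdsWithin, hexp, tendsto_inv_nhdsGT_zero.eventually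
    (eventually_le_rpow_mul_exp_mul_atTop hβ hαβ)] with v (hv : 0 < v) hγv hinv
  rw [Real.norm_of_nonneg (inv_pos.mpr hv).le, Real.norm_of_nonneg (pos α β γ hv).le]
  calc v⁻¹ ≤ v⁻¹ ^ α * Real.exp (β * v⁻¹) := hinv
    _ = v ^ (-α) * Real.exp (β / v) := by
      rw [Real.inv_rpow hv.le, Real.rpow_neg hv.le, div_eq_mul_inv]
    _ ≤ v ^ (-α) * Real.exp (1 + (β / v - γ * v)) := by
      gcongr
      linarith
    _ = Real.exp 1 * scaleDensity α β γ v := by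
      rw [scaleDensity, Real.exp_add, mul_left_comm]

lemma not_integrableOn (γ : ℝ) (hβ : 0 ≤ β) (hαβ : 0 < β ∨ 1 ≤ α) {s : Set ℝ}
    (hs : s ∈ 𝓝[>] 0) : ¬IntegrableOn (scaleDensity α β γ) s :=
  not_integrableOn_of_sub_inv_isBigO_nhdsGT hs <| by
    simpa only [sub_zero] using inv_isBigO_nhdsGT_zero γ hβ hαβ

lemma lintegral_Ioo_eq_top {x : ℝ} (hx : 0 < x) (γ : ℝ) (hβ : 0 ≤ β) (hαβ : 0 < β ∨ 1 ≤ α) :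
    ∫⁻ v in Ioo 0 x, ENNReal.ofReal (scaleDensity α β γ v) = ⊤ := by
  have hmeas : AEStronglyMeasurable (scaleDensity α β γ) (volume.restrict (Ioo 0 x)) :=
    ((locallyIntegrableOn_Ioi α β γ).mono_set Ioo_subset_Ioi_self).aestronglyMeasurable
  have hnonneg : 0 ≤ᵐ[volume.restrict (Ioo 0 x)] scaleDensity α β γ :=
    ae_restrict_of_forall_mem measurableSet_Ioo fun v hv => (pos α β γ hv.1).le
  refine not_ne_iff.mp fun hfinite => not_integrableOn γ hβ hαβ (Ioo_mem_nhdsGT hx) ?_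
  exact (lintegral_ofReal_ne_top_iff_integrable hmeas hnonneg).mp hfinite

lemma integrableOn_Ioi {x : ℝ} (hx : 0 < x) (β : ℝ) (hγ : 0 ≤ γ) (hαγ : 0 < γ ∨ 1 < α) :
    IntegrableOn (scaleDensity α β γ) (Ioi x) := by
  obtain ⟨s, hs, hO⟩ := exists_rpow_mul_exp_isBigO_rpow_atTop hγ hαγ
  have hexp : (fun v => Real.exp (β / v)) =O[atTop] fun _ => (1 : ℝ) :=
    ((Real.continuous_exp.tendsto 0).comp (tendsto_id.const_div_atTop β)).isBigO_one ℝ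
  have hdom : scaleDensity α β γ =O[atTop] fun v => v ^ s :=
    (hO.mul hexp).congr (fun v => by rw [scaleDensity, mul_assoc, ← Real.exp_add]; ring_nf)
      fun v => mul_one _
  have hloc : LocallyIntegrableOn (scaleDensity α β γ) (Ici x) :=
    (locallyIntegrableOn_Ioi α β γ).mono_set (Ici_subset_Ioi.mpr hx)
  exact (hloc.integrableOn_of_isBigO_atTop hdom (integrableAtFilter_rpow_atTop_iff.mpr hs)).mono_set
    Ioi_subset_Ici_self

lemma tendsto_intervalIntegral_div_integral_Ioi {x : ℝ} (hx : 0 < x) (hβ : 0 ≤ β) (hγ : 0 ≤ γ)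
    (hαβ : 0 < β ∨ 1 ≤ α) (hαγ : 0 < γ ∨ 1 < α) :
    Tendsto (fun ε => (∫ v in ε..x, scaleDensity α β γ v) / ∫ v in Ioi ε, scaleDensity α β γ v)
      (𝓝[>] 0) (𝓝 1) :=
  tendsto_intervalIntegral_div_integral_Ioi_of_not_integrableOn
    ((locallyIntegrableOn_Ioi α β γ).mono_set Ioc_subset_Ioi_self)
    (fun _ hv => (pos α β γ hv.1).le) (not_integrableOn γ hβ hαβ (Ioc_mem_nhdsGT hx))
    (integrableOn_Ioi hx β hγ hαγ)

end scaleDensity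

theorem stmt_10_general (b x p₀ p₁ p₂ : ℝ) (hb : b ≠ 0) (hx : 0 < x) (hp₂ : 0 ≤ p₂) (hp₀ : 0 ≤ p₀)
    (f : ℝ → ℝ)
    (hf : ∀ v, f v = v ^ (-(2 * p₁) / b ^ 2) *
      Real.exp (2 * p₀ / (b ^ 2 * v) - 2 * p₂ * v / b ^ 2))
    (hzero : 0 < p₀ ∨ b ^ 2 ≤ 2 * p₁) (hinfty : 0 < p₂ ∨ b ^ 2 < 2 * p₁) :
    (∫⁻ v in Set.Ioo (0 : ℝ) x, ENNReal.ofReal (f v)) = ⊤ ∧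
    Tendsto (fun ε : ℝ => (∫ v in ε..x, f v) / ∫ v in Set.Ioi ε, f v)
      (𝓝[>] 0) (𝓝 1) := by
  have hb2 : 0 < b ^ 2 := by positivity
  obtain rfl : f = scaleDensity (2 * p₁ / b ^ 2) (2 * p₀ / b ^ 2) (2 * p₂ / b ^ 2) := by
    ext v
    rw [hf, scaleDensity, neg_div, div_div, mul_div_right_comm (2 * p₂)]
  have hβ : 0 ≤ 2 * p₀ / b ^ 2 := by positivity
  have hγ : 0 ≤ 2 * p₂ / b ^ 2 := by positivity
  have hαβ : 0 < 2 * p₀ / b ^ 2 ∨ 1 ≤ 2 * p₁ / b ^ 2 :=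
    hzero.imp (fun h => by positivity) (one_le_div₀ hb2).mpr
  have hαγ : 0 < 2 * p₂ / b ^ 2 ∨ 1 < 2 * p₁ / b ^ 2 :=
    hinfty.imp (fun h => by positivity) (one_lt_div₀ hb2).mpr
  exact ⟨scaleDensity.lintegral_Ioo_eq_top hx _ hβ hαβ,
    scaleDensity.tendsto_intervalIntegral_div_integral_Ioi hx hβ hγ hαβ hαγ⟩

/-- End of the proof of Theorem 2.7 (divergent case): if `p₀ > 0` or `2p₁ ≥ b²`, then
`∫_0^x f(v) dv = +∞` and `lim_{ε→0⁺} (∫_ε^x f) / (∫_ε^∞ f) = 1`, where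
`f(v) = v^{-2p₁/b²} exp(2p₀/(b²v) - 2p₂v/b²)`. -/
theorem stmt_10 (b x p₀ p₁ p₂ : ℝ) (hb : 0 < b) (hx : 0 < x)
    (hp₂ : 0 < p₂) (hp₁ : 0 ≤ p₁) (hp₀ : 0 ≤ p₀)
    (f : ℝ → ℝ)
    (hf : ∀ v, f v = v ^ (-(2 * p₁) / b ^ 2) *
      Real.exp (2 * p₀ / (b ^ 2 * v) - 2 * p₂ * v / b ^ 2))
    (hcase : 0 < p₀ ∨ b ^ 2 ≤ 2 * p₁) :
    (∫⁻ v in Set.Ioo (0 : ℝ) x, ENNReal.ofReal (f v)) = ⊤ ∧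
    Tendsto (fun ε : ℝ => (∫ v in ε..x, f v) / ∫ v in Set.Ioi ε, f v)
      (𝓝[>] 0) (𝓝 1) :=
  stmt_10_general b x p₀ p₁ p₂ hb.ne' hx hp₂.le hp₀ f hf hcase (.inl hp₂)
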